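/- Let C ⊆ ℝⁿ be a nonempty closed semi-algebraic set and let ν be a semi-algebraic norm on ℝⁿ such that both ν and its dual norm ν* are (Fréchet) differentiable at every point other than the origin. Let S(C) be the set of x ∈ ℝⁿ whose best ν-approximation in C is not unique. Then Ω_ν(C) := {(x, z) : x ∈ ℝⁿ \ S(C), z ∈ C, dist_ν(x, C) = ν(x − z)} is a semi-algebraic subset of ℝⁿ × ℝⁿ, and its projection onto the first factor equals ℝⁿ \ S(C), which is a dense subset of ℝⁿ. -/

import Mathlib

/-- A subset of `ℝⁿ` is semi-algebraic if it is a finite union of sets of the form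
`{x : P₁(x) > 0, …, P_λ(x) > 0, Q(x) = 0}` with `P₁, …, P_λ, Q` real polynomials. -/
def IsSemialgebraic {n : ℕ} (S : Set (Fin n → ℝ)) : Prop :=
  ∃ (N : ℕ) (T : Fin N → Set (Fin n → ℝ)),
    (∀ k, ∃ (m : ℕ) (P : Fin m → MvPolynomial (Fin n) ℝ) (Q : MvPolynomial (Fin n) ℝ),
      T k = {x | (∀ i, 0 < MvPolynomial.eval x (P i)) ∧ MvPolynomial.eval x Q = 0}) ∧
    S = ⋃ k, T k

/-- A function `f : ℝⁿ → ℝ` is semi-algebraic if its graph is a semi-algebraic subset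
of `ℝ^(n+1)`. -/
def IsSemialgebraicFn {n : ℕ} (f : (Fin n → ℝ) → ℝ) : Prop :=
  IsSemialgebraic {z : Fin (n + 1) → ℝ | ∃ x : Fin n → ℝ, z = Fin.snoc x (f x)}

/-- A subset of `ℝⁿ × ℝⁿ` is semi-algebraic if the corresponding subset of `ℝ^(n+n)`
(obtained by concatenating coordinates) is semi-algebraic. -/
def IsSemialgebraicProd {n : ℕ} (S : Set ((Fin n → ℝ) × (Fin n → ℝ))) : Prop :=
  IsSemialgebraic {z : Fin (n + n) → ℝ | ∃ p ∈ S, z = Fin.append p.1 p.2}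

/-- The distance from `x` to the set `C` measured in the norm `ν`. -/
noncomputable def distNu {E : Type*} [AddCommGroup E] (ν : E → ℝ) (C : Set E) (x : E) : ℝ :=
  sInf ((fun y => ν (x - y)) '' C)

/-- The dual norm `ν*(x) = max { yᵀ x : ν(y) ≤ 1 }`. -/
noncomputable def dualNu {n : ℕ} (ν : (Fin n → ℝ) → ℝ) (x : Fin n → ℝ) : ℝ :=
  sSup ((fun y => ∑ i, y i * x i) '' {y | ν y ≤ 1})


open Polynomial in
/-- Matching sign diagrams of a family of pairs of polynomials on two intervals. -/
inductive SGood (L : Set (ℝ[X] × ℝ[X])) : ℝ → ℝ → ℝ → ℝ → Prop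
  | base (a b a' b' : ℝ) (h : a < b) (h' : a' < b')
      (hs : ∀ r ∈ L, ∀ x ∈ Set.Ioo a b, ∀ x' ∈ Set.Ioo a' b',
        SignType.sign (r.1.eval x) = SignType.sign (r.2.eval x')) : SGood L a b a' b'
  | split (a c b a' c' b' : ℝ) (hr : ∃ r ∈ L, r.1 ≠ 0 ∧ r.1.eval c = 0)
      (hs : ∀ r ∈ L, SignType.sign (r.1.eval c) = SignType.sign (r.2.eval c'))
      (h1 : SGood L a c a' c') (h2 : SGood L c b c' b') : SGood L a b a' b'

lemma SGood.lt {L : Set (Polynomial ℝ × Polynomial ℝ)} {a b a' b' : ℝ}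
    (h : SGood L a b a' b') : a < b ∧ a' < b' := by
  induction h with
  | base a b a' b' h h' hs => exact ⟨h, h'⟩
  | split a c b a' c' b' hr hs h1 h2 ih1 ih2 =>
    exact ⟨ih1.1.trans ih2.1, ih1.2.trans ih2.2⟩

lemma SGood.exists_match {L : Set (Polynomial ℝ × Polynomial ℝ)} {a b a' b' : ℝ}
    (h : SGood L a b a' b') : ∀ x ∈ Set.Ioo a b, ∃ x' : ℝ, ∀ r ∈ L,
      SignType.sign (r.1.eval x) = SignType.sign (r.2.eval x') := by
  induction h with
  | base a b a' b' h h' hs =>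
    intro x hx
    obtain ⟨m, hm⟩ := exists_between h'
    exact ⟨m, fun r hr => hs r hr x hx m hm⟩
  | split a c b a' c' b' hr hs h1 h2 ih1 ih2 =>
    intro x hx
    rcases lt_trichotomy x c with h | h | h
    · exact ih1 x ⟨hx.1, h⟩
    · subst h; exact ⟨c', hs⟩
    · exact ih2 x ⟨h, hx.2⟩

lemma SGood.insert_const {L : Set (Polynomial ℝ × Polynomial ℝ)} {a b a' b' : ℝ}
    (h : SGood L a b a' b') (p : Polynomial ℝ × Polynomial ℝ)
    (hp : ∀ x x', SignType.sign (p.1.eval x) = SignType.sign (p.2.eval x')) :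
    SGood (insert p L) a b a' b' := by
  induction h with
  | base a b a' b' h h' hs =>
    refine SGood.base _ _ _ _ h h' ?_
    rintro r (rfl | hr) x hx x' hx'
    · exact hp _ _
    · exact hs r hr x hx x' hx'
  | split a c b a' c' b' hr hs h1 h2 ih1 ih2 =>
    refine SGood.split _ c _ _ c' _ ?_ ?_ ih1 ih2
    · obtain ⟨r, hr, h⟩ := hr
      exact ⟨r, Or.inr hr, h⟩
    · rintro r (rfl | hr)
      · exact hp _ _
      · exact hs r hr

lemma sgood_mono_aux (p q : ℝ → ℝ) (a b a' b' : ℝ) (h : a < b) (h' : a' < b')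
    (hp : ContinuousOn p (Set.Icc a b)) (hq : ContinuousOn q (Set.Icc a' b'))
    (mp : StrictMonoOn p (Set.Icc a b)) (mq : StrictMonoOn q (Set.Icc a' b'))
    (ha : SignType.sign (p a) = SignType.sign (q a'))
    (hb : SignType.sign (p b) = SignType.sign (q b')) :
    (∀ x ∈ Set.Ioo a b, ∀ x' ∈ Set.Ioo a' b', SignType.sign (p x) = SignType.sign (q x')) ∨
    ∃ c ∈ Set.Ioo a b, ∃ c' ∈ Set.Ioo a' b', p c = 0 ∧ q c' = 0 ∧
      (∀ x ∈ Set.Ioo a c, ∀ x' ∈ Set.Ioo a' c', SignType.sign (p x) = SignType.sign (q x')) ∧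
      (∀ x ∈ Set.Ioo c b, ∀ x' ∈ Set.Ioo c' b', SignType.sign (p x) = SignType.sign (q x')) := by
  by_cases h1 : 0 ≤ p a
  · left
    have h2 : 0 ≤ q a' := by
      rw [← sign_nonneg_iff] at h1 ⊢; rwa [← ha]
    intro x hx x' hx'
    have e1 := mp ⟨le_refl a, h.le⟩ ⟨hx.1.le, hx.2.le⟩ hx.1
    have e2 := mq ⟨le_refl a', h'.le⟩ ⟨hx'.1.le, hx'.2.le⟩ hx'.1
    rw [sign_pos (h1.trans_lt e1), sign_pos (h2.trans_lt e2)]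
  by_cases h2 : p b ≤ 0
  · left
    have h3 : q b' ≤ 0 := by
      rw [← sign_nonpos_iff] at h2 ⊢; rwa [← hb]
    intro x hx x' hx'
    have e1 := mp ⟨hx.1.le, hx.2.le⟩ ⟨h.le, le_refl b⟩ hx.2
    have e2 := mq ⟨hx'.1.le, hx'.2.le⟩ ⟨h'.le, le_refl b'⟩ hx'.2
    rw [sign_neg (e1.trans_le h2), sign_neg (e2.trans_le h3)]
  push Not at h1 h2
  right
  have h3 : q a' < 0 := by
    rw [← sign_eq_neg_one_iff] at h1 ⊢; rwa [← ha]
  have h4 : 0 < q b' := by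
    rw [← sign_eq_one_iff] at h2 ⊢; rwa [← hb]
  obtain ⟨c, hc, hc0⟩ := intermediate_value_Ioo h.le hp ⟨h1, h2⟩
  obtain ⟨c', hc', hc0'⟩ := intermediate_value_Ioo h'.le hq ⟨h3, h4⟩
  refine ⟨c, hc, c', hc', hc0, hc0', ?_, ?_⟩
  · intro x hx x' hx'
    have e1 := mp ⟨hx.1.le, (hx.2.trans hc.2).le⟩ ⟨hc.1.le, hc.2.le⟩ hx.2
    have e2 := mq ⟨hx'.1.le, (hx'.2.trans hc'.2).le⟩ ⟨hc'.1.le, hc'.2.le⟩ hx'.2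
    rw [sign_neg (by linarith), sign_neg (by linarith)]
  · intro x hx x' hx'
    have e1 := mp ⟨hc.1.le, hc.2.le⟩ ⟨(hc.1.trans hx.1).le, hx.2.le⟩ hx.1
    have e2 := mq ⟨hc'.1.le, hc'.2.le⟩ ⟨(hc'.1.trans hx'.1).le, hx'.2.le⟩ hx'.1
    rw [sign_pos (by linarith), sign_pos (by linarith)]

lemma sgood_aux (p q : Polynomial ℝ) (a b a' b' : ℝ) (h : a < b) (h' : a' < b')
    (hd : ∀ x ∈ Set.Ioo a b, ∀ x' ∈ Set.Ioo a' b',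
      SignType.sign (p.derivative.eval x) = SignType.sign (q.derivative.eval x'))
    (ha : SignType.sign (p.eval a) = SignType.sign (q.eval a'))
    (hb : SignType.sign (p.eval b) = SignType.sign (q.eval b')) :
    (∀ x ∈ Set.Ioo a b, ∀ x' ∈ Set.Ioo a' b',
      SignType.sign (p.eval x) = SignType.sign (q.eval x')) ∨
    ∃ c ∈ Set.Ioo a b, ∃ c' ∈ Set.Ioo a' b', p ≠ 0 ∧ p.eval c = 0 ∧ q.eval c' = 0 ∧
      (∀ x ∈ Set.Ioo a c, ∀ x' ∈ Set.Ioo a' c',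
        SignType.sign (p.eval x) = SignType.sign (q.eval x')) ∧
      (∀ x ∈ Set.Ioo c b, ∀ x' ∈ Set.Ioo c' b',
        SignType.sign (p.eval x) = SignType.sign (q.eval x')) := by
  obtain ⟨m, hm⟩ := exists_between h
  obtain ⟨m', hm'⟩ := exists_between h'
  have hp1 : ∀ x ∈ Set.Ioo a b, SignType.sign (p.derivative.eval x) =
      SignType.sign (p.derivative.eval m) := fun x hx => by
    rw [hd x hx m' hm', hd m hm m' hm']
  have hq1 : ∀ x' ∈ Set.Ioo a' b', SignType.sign (q.derivative.eval x') =
      SignType.sign (p.derivative.eval m) := fun x' hx' => by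
    rw [hd m hm x' hx']
  have ne : p.derivative.eval m ≠ 0 → p ≠ 0 := by
    rintro h rfl; simp at h
  have key : ∀ (r : Polynomial ℝ) (a b : ℝ), (∀ x ∈ Set.Ioo a b, 0 < r.derivative.eval x) →
      StrictMonoOn (fun x => r.eval x) (Set.Icc a b) := by
    intro r a b hr
    apply strictMonoOn_of_deriv_pos (convex_Icc a b) r.continuous.continuousOn
    intro x hx
    rw [interior_Icc] at hx
    simpa using hr x hx
  rcases lt_trichotomy (p.derivative.eval m) 0 with hs | hs | hs
  · rw [sign_neg hs] at hp1 hq1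
    have mp := key (-p) a b (fun x hx => by
      have := hp1 x hx; rw [sign_eq_neg_one_iff] at this; simpa using this)
    have mq := key (-q) a' b' (fun x hx => by
      have := hq1 x hx; rw [sign_eq_neg_one_iff] at this; simpa using this)
    have := sgood_mono_aux _ _ a b a' b' h h' (-p).continuous.continuousOn
      (-q).continuous.continuousOn mp mq (by simpa [Left.sign_neg] using ha)
      (by simpa [Left.sign_neg] using hb)
    simp only [Polynomial.eval_neg, Left.sign_neg, neg_inj, neg_eq_zero] at this
    rcases this with h | ⟨c, hc, c', hc', h1, h2, h3⟩
    · exact Or.inl h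
    · exact Or.inr ⟨c, hc, c', hc', ne hs.ne, h1, h2, h3⟩
  · left
    have key0 : ∀ (r : Polynomial ℝ) (a b : ℝ), a < b →
        (∀ x ∈ Set.Ioo a b, r.derivative.eval x = 0) →
        ∀ x, r.eval x = r.eval a := by
      intro r a b hab hr x
      have : r.derivative = 0 :=
        Polynomial.eq_zero_of_infinite_isRoot _ ((Set.Ioo_infinite hab).mono hr)
      rw [Polynomial.eq_C_of_derivative_eq_zero this]; simp
    rw [hs, sign_zero] at hp1 hq1
    intro x hx x' hx'
    rw [key0 p a b h (fun x hx => sign_eq_zero_iff.1 (hp1 x hx)) x,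
      key0 q a' b' h' (fun x hx => sign_eq_zero_iff.1 (hq1 x hx)) x', ha]
  · rw [sign_pos hs] at hp1 hq1
    have mp := key p a b (fun x hx => sign_eq_one_iff.1 (hp1 x hx))
    have mq := key q a' b' (fun x hx => sign_eq_one_iff.1 (hq1 x hx))
    have := sgood_mono_aux _ _ a b a' b' h h' p.continuous.continuousOn
      q.continuous.continuousOn mp mq ha hb
    rcases this with h | ⟨c, hc, c', hc', h1, h2, h3⟩
    · exact Or.inl h
    · exact Or.inr ⟨c, hc, c', hc', ne hs.ne', h1, h2, h3⟩

lemma SGood.insert_step {L : Set (Polynomial ℝ × Polynomial ℝ)} (p q : Polynomial ℝ)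
    (hder : (p.derivative, q.derivative) ∈ L)
    (hroot : ∀ c c' : ℝ, (∃ r ∈ L, r.1 ≠ 0 ∧ r.1.eval c = 0) →
      (∀ r ∈ L, SignType.sign (r.1.eval c) = SignType.sign (r.2.eval c')) →
      SignType.sign (p.eval c) = SignType.sign (q.eval c')) {a b a' b' : ℝ}
    (h : SGood L a b a' b') (ha : SignType.sign (p.eval a) = SignType.sign (q.eval a'))
    (hb : SignType.sign (p.eval b) = SignType.sign (q.eval b')) :
    SGood (insert (p, q) L) a b a' b' := by
  induction h with
  | base a b a' b' h h' hs =>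
    rcases sgood_aux p q a b a' b' h h' (fun x hx x' hx' => hs _ hder x hx x' hx') ha hb with
      h1 | ⟨c, hc, c', hc', hp0, h1, h2, h3, h4⟩
    · refine SGood.base _ _ _ _ h h' ?_
      rintro r (rfl | hr) x hx x' hx'
      · exact h1 x hx x' hx'
      · exact hs r hr x hx x' hx'
    · refine SGood.split _ c _ _ c' _ ⟨(p, q), Or.inl rfl, hp0, h1⟩ ?_ ?_ ?_
      · rintro r (rfl | hr)
        · simp [h1, h2]
        · exact hs r hr c hc c' hc'
      · refine SGood.base _ _ _ _ hc.1 hc'.1 ?_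
        rintro r (rfl | hr) x hx x' hx'
        · exact h3 x hx x' hx'
        · exact hs r hr x ⟨hx.1, hx.2.trans hc.2⟩ x' ⟨hx'.1, hx'.2.trans hc'.2⟩
      · refine SGood.base _ _ _ _ hc.2 hc'.2 ?_
        rintro r (rfl | hr) x hx x' hx'
        · exact h4 x hx x' hx'
        · exact hs r hr x ⟨hc.1.trans hx.1, hx.2⟩ x' ⟨hc'.1.trans hx'.1, hx'.2⟩
  | split a c b a' c' b' hr hs h1 h2 ih1 ih2 =>
    have hc := hroot c c' hr hs
    refine SGood.split _ c _ _ c' _ ?_ ?_ (ih1 ha hc) (ih2 hc hb)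
    · obtain ⟨r, hr, h⟩ := hr
      exact ⟨r, Or.inr hr, h⟩
    · rintro r (rfl | hr)
      · exact hc
      · exact hs r hr

/-- Pseudo-division. -/
lemma exists_prem {A : Type*} [CommRing A] [IsDomain A] (g : Polynomial A) (hg : g ≠ 0) :
    ∀ (d : ℕ) (f : Polynomial A), f.degree < d → ∃ r : Polynomial A, r.degree < g.degree ∧
      ∃ (k : ℕ) (h : Polynomial A), Polynomial.C g.leadingCoeff ^ k * f = h * g + r := by
  intro d
  induction d with
  | zero =>
    intro f hf
    refine ⟨0, ?_, 0, 0, ?_⟩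
    · simpa [bot_lt_iff_ne_bot] using hg
    · have : f = 0 := by
        by_contra h
        have := Polynomial.zero_le_degree_iff.2 h
        exact absurd hf (not_lt.2 (by simpa using this))
      simp [this]
  | succ d ih =>
    intro f hf
    by_cases hfg : f.degree < g.degree
    · exact ⟨f, hfg, 0, 0, by simp⟩
    push Not at hfg
    by_cases hf0 : f = 0
    · subst hf0
      exact absurd (by simpa using hfg) hg
    have hn : g.natDegree ≤ f.natDegree := Polynomial.natDegree_le_natDegree hfg
    have hlg : g.leadingCoeff ≠ 0 := Polynomial.leadingCoeff_ne_zero.2 hg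
    have hlf : f.leadingCoeff ≠ 0 := Polynomial.leadingCoeff_ne_zero.2 hf0
    set u := Polynomial.C g.leadingCoeff * f with hu
    set v := (Polynomial.C f.leadingCoeff * Polynomial.X ^ (f.natDegree - g.natDegree)) * g with hv
    have du : u.degree = f.degree := by simp [hu, hg]
    have dv : v.degree = f.degree := by
      simp only [hv, Polynomial.degree_mul, Polynomial.degree_C hlf, Polynomial.degree_X_pow, zero_add]
      rw [Polynomial.degree_eq_natDegree hg, Polynomial.degree_eq_natDegree hf0]
      norm_cast; omega
    have hlt : (u - v).degree < f.degree := by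
      rw [← du]
      apply Polynomial.degree_sub_lt_left (du.trans dv.symm)
      · rw [hu]; simp [hg, hf0]
      · rw [hu, hv]
        simp only [Polynomial.leadingCoeff_mul, Polynomial.leadingCoeff_C,
          Polynomial.leadingCoeff_X_pow, mul_one]
        ring
    have hlt' : (u - v).degree < d := by
      rw [Polynomial.degree_eq_natDegree hf0] at hf hlt
      have : f.natDegree < d + 1 := by exact_mod_cast hf
      refine hlt.trans_le ?_
      exact_mod_cast Nat.lt_succ_iff.1 this
    obtain ⟨r, hr, k, h, e⟩ := ih (u - v) hlt'
    refine ⟨r, hr, k + 1, h + Polynomial.C g.leadingCoeff ^ k *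
      (Polynomial.C f.leadingCoeff * Polynomial.X ^ (f.natDegree - g.natDegree)), ?_⟩
    have : Polynomial.C g.leadingCoeff ^ (k + 1) * f =
      Polynomial.C g.leadingCoeff ^ k * (u - v) + Polynomial.C g.leadingCoeff ^ k * v := by
      rw [hu]; ring
    rw [this, e, hv]; ring

lemma exists_prem_even {A : Type*} [CommRing A] [IsDomain A] (f g : Polynomial A) (hg : g ≠ 0) :
    ∃ r : Polynomial A, r.degree < g.degree ∧
      ∃ (k : ℕ) (h : Polynomial A), Polynomial.C (g.leadingCoeff ^ k) ^ 2 * f = h * g + r := by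
  obtain ⟨r, hr, k, h, e⟩ := exists_prem g hg (f.natDegree + 1) f
    (Polynomial.degree_le_natDegree.trans_lt (by exact_mod_cast Nat.lt_succ_self _))
  refine ⟨Polynomial.C (g.leadingCoeff ^ k) * r, ?_, k, Polynomial.C (g.leadingCoeff ^ k) * h, ?_⟩
  · rwa [Polynomial.degree_C_mul (pow_ne_zero _ (Polynomial.leadingCoeff_ne_zero.2 hg))]
  · rw [pow_two, mul_assoc]
    nth_rewrite 2 [Polynomial.C_pow]
    rw [e]; ring

open Classical in
/-- A chosen pseudo-remainder. -/
noncomputable def prem {A : Type*} [CommRing A] [IsDomain A] (f g : Polynomial A) : Polynomial A :=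
  if hg : g ≠ 0 then (exists_prem_even f g hg).choose else 0

lemma prem_spec {A : Type*} [CommRing A] [IsDomain A] (f g : Polynomial A) (hg : g ≠ 0) :
    (prem f g).degree < g.degree ∧
      ∃ (k : ℕ) (h : Polynomial A),
        Polynomial.C (g.leadingCoeff ^ k) ^ 2 * f = h * g + prem f g := by
  rw [prem, dif_pos hg]
  exact (exists_prem_even f g hg).choose_spec

/-- Saturated families of polynomials. -/
def PSat {A : Type*} [CommRing A] [IsDomain A] (L : Finset (Polynomial A)) (d : ℕ) : Prop :=
  ∀ g ∈ L, (d : WithBot ℕ) ≤ g.degree → Polynomial.derivative g ∈ L ∧ g.eraseLead ∈ L ∧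
    ∀ f ∈ L, g.degree ≤ f.degree → prem f g ∈ L

lemma exists_psat {A : Type*} [CommRing A] [IsDomain A] : ∀ (d : ℕ) (L : Finset (Polynomial A)),
    PSat L d → ∃ L', L ⊆ L' ∧ PSat L' 0 := by
  classical
  intro d
  induction d with
  | zero => exact fun L h => ⟨L, subset_rfl, h⟩
  | succ d ih =>
    intro L hL
    set D := L.filter (fun g => g.degree = (d : WithBot ℕ)) with hD
    set N := D.image Polynomial.derivative ∪ D.image Polynomial.eraseLead ∪
      (L ×ˢ D).image (fun x => prem x.1 x.2) with hN
    have hDne : ∀ g ∈ D, g ≠ 0 ∧ g.degree = d ∧ g ∈ L := by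
      intro g hg
      rw [hD, Finset.mem_filter] at hg
      refine ⟨?_, hg.2, hg.1⟩
      rintro rfl
      simp at hg
    have hNlt : ∀ t ∈ N, t.degree < d := by
      intro t ht
      simp only [hN, Finset.mem_union, Finset.mem_image, Finset.mem_product, Prod.exists] at ht
      rcases ht with (⟨g, hg, rfl⟩ | ⟨g, hg, rfl⟩) | ⟨f, g, ⟨hf, hg⟩, rfl⟩ <;>
        obtain ⟨h0, h1, h2⟩ := hDne g hg <;> rw [← h1]
      · exact Polynomial.degree_derivative_lt h0
      · exact Polynomial.degree_eraseLead_lt h0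
      · exact (prem_spec f g h0).1
    have hmem : ∀ g ∈ L ∪ N, (d : WithBot ℕ) ≤ g.degree → g ∈ L := by
      intro g hg hd
      rcases Finset.mem_union.1 hg with h | h
      · exact h
      · exact absurd (hNlt g h) (not_lt.2 hd)
    obtain ⟨L', h1, h2⟩ := ih (L ∪ N) (by
      intro g hg hd
      have hgL := hmem g hg hd
      rcases hd.eq_or_lt with he | hlt
      · have hgD : g ∈ D := by rw [hD, Finset.mem_filter]; exact ⟨hgL, he.symm⟩
        refine ⟨?_, ?_, ?_⟩
        · apply Finset.mem_union_right
          simp only [hN, Finset.mem_union, Finset.mem_image]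
          exact Or.inl (Or.inl ⟨g, hgD, rfl⟩)
        · apply Finset.mem_union_right
          simp only [hN, Finset.mem_union, Finset.mem_image]
          exact Or.inl (Or.inr ⟨g, hgD, rfl⟩)
        · intro f hf hfg
          have hfL := hmem f hf (hd.trans hfg)
          apply Finset.mem_union_right
          simp only [hN, Finset.mem_union, Finset.mem_image]
          exact Or.inr ⟨(f, g), Finset.mem_product.2 ⟨hfL, hgD⟩, rfl⟩
      · have hle : ((d + 1 : ℕ) : WithBot ℕ) ≤ g.degree := by
          have h0 : g ≠ 0 := by rintro rfl; simp at hlt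
          rw [Polynomial.degree_eq_natDegree h0] at hlt ⊢
          exact_mod_cast Nat.succ_le_of_lt (by exact_mod_cast hlt)
        obtain ⟨a1, a2, a3⟩ := hL g hgL hle
        exact ⟨Finset.mem_union_left _ a1, Finset.mem_union_left _ a2, fun f hf hfg =>
          Finset.mem_union_left _ (a3 f (hmem f hf (hd.trans hfg)) hfg)⟩)
    exact ⟨L', Finset.subset_union_left.trans h1, h2⟩

lemma exists_psat' {A : Type*} [CommRing A] [IsDomain A] (L : Finset (Polynomial A)) :
    ∃ L', L ⊆ L' ∧ PSat L' 0 := by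
  classical
  refine exists_psat (L.sup Polynomial.natDegree + 1) L ?_
  intro g hg h
  have h1 : g.natDegree ≤ L.sup Polynomial.natDegree := Finset.le_sup hg
  have h2 : g.degree ≤ g.natDegree := Polynomial.degree_le_natDegree
  have := h.trans h2
  have : L.sup Polynomial.natDegree + 1 ≤ g.natDegree := by exact_mod_cast this
  omega

lemma eventually_sign_atTop (p : Polynomial ℝ) :
    ∀ᶠ M in Filter.atTop, SignType.sign (p.eval M) = SignType.sign p.leadingCoeff := by
  by_cases hd : 0 < p.degree
  · rcases lt_trichotomy p.leadingCoeff 0 with h | h | h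
    · filter_upwards [(p.tendsto_atBot_of_leadingCoeff_nonpos hd h.le).eventually_lt_atBot 0]
        with M hM
      rw [sign_neg hM, sign_neg h]
    · rw [Polynomial.leadingCoeff_eq_zero] at h
      simp [h]
    · filter_upwards [(p.tendsto_atTop_of_leadingCoeff_nonneg hd h.le).eventually_gt_atTop 0]
        with M hM
      rw [sign_pos hM, sign_pos h]
  · rw [Polynomial.eq_C_of_degree_le_zero (not_lt.1 hd)]
    simp

lemma eventually_sign_neg (p : Polynomial ℝ) :
    ∀ᶠ M in Filter.atTop, SignType.sign (p.eval (-M)) =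
      SignType.sign (p.leadingCoeff) * SignType.sign ((-1 : ℝ) ^ p.natDegree) := by
  filter_upwards [eventually_sign_atTop (p.comp (-Polynomial.X))] with M hM
  rw [Polynomial.leadingCoeff_comp (by simp)] at hM
  simpa [sign_mul] using hM

/-- The pair of specialisations of a parametric polynomial. -/
noncomputable def spair {A : Type*} [CommRing A] (e e' : A →+* ℝ) (f : Polynomial A) :
    Polynomial ℝ × Polynomial ℝ := (f.map e, f.map e')

lemma map_eraseLead_of {A : Type*} [CommRing A] (e : A →+* ℝ) (f : Polynomial A)
    (h : e f.leadingCoeff = 0) : f.eraseLead.map e = f.map e := by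
  have h1 := congrArg (Polynomial.map e) f.eraseLead_add_C_mul_X_pow
  rw [Polynomial.map_add, Polynomial.map_mul, Polynomial.map_C, h] at h1
  simpa using h1

lemma exists_trunc {A : Type*} [CommRing A] [IsDomain A] (e e' : A →+* ℝ)
    (s : Finset (Polynomial A)) (hs : PSat s 0)
    (hlc : ∀ g ∈ s, SignType.sign (e g.leadingCoeff) = SignType.sign (e' g.leadingCoeff)) :
    ∀ (d : ℕ) (g : Polynomial A), g.degree < d → g ∈ s → g.map e ≠ 0 →
      ∃ g' ∈ s, g'.map e = g.map e ∧ g'.map e' = g.map e' ∧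
        e g'.leadingCoeff ≠ 0 ∧ e' g'.leadingCoeff ≠ 0 := by
  intro d
  induction d with
  | zero =>
    intro g hg hgs hne
    have : g = 0 := by
      by_contra h
      have := Polynomial.zero_le_degree_iff.2 h
      exact absurd hg (not_lt.2 (by simpa using this))
    simp [this] at hne
  | succ d ih =>
    intro g hg hgs hne
    have hg0 : g ≠ 0 := by rintro rfl; simp at hne
    by_cases h : e g.leadingCoeff = 0
    · have h' : e' g.leadingCoeff = 0 := by
        have := hlc g hgs
        rw [h, sign_zero] at this
        exact sign_eq_zero_iff.1 this.symm
      have hm := (hs g hgs (by simpa using Polynomial.zero_le_degree_iff.2 hg0)).2.1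
      have hlt : g.eraseLead.degree < d := by
        have h1 := Polynomial.degree_eraseLead_lt hg0
        rw [Polynomial.degree_eq_natDegree hg0] at hg h1
        have : g.natDegree < d + 1 := by exact_mod_cast hg
        refine h1.trans_le ?_
        exact_mod_cast Nat.lt_succ_iff.1 this
      obtain ⟨g', a, b, c⟩ := ih g.eraseLead hlt hm (by rwa [map_eraseLead_of e g h])
      rw [map_eraseLead_of e g h, map_eraseLead_of e' g h'] at *
      exact ⟨g', a, b, c⟩
    · refine ⟨g, hgs, rfl, rfl, h, fun h' => h ?_⟩
      have := hlc g hgs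
      rw [h', sign_zero] at this
      exact sign_eq_zero_iff.1 this

lemma sign_prem {A : Type*} [CommRing A] [IsDomain A] (e : A →+* ℝ) (f g : Polynomial A)
    (hg : g ≠ 0) (hl : e g.leadingCoeff ≠ 0) (c : ℝ) (hc : (g.map e).eval c = 0) :
    SignType.sign ((f.map e).eval c) = SignType.sign (((prem f g).map e).eval c) := by
  obtain ⟨-, k, h, heq⟩ := prem_spec f g hg
  have := congrArg (fun t => (Polynomial.map e t).eval c) heq
  simp only [Polynomial.map_mul, Polynomial.map_pow, Polynomial.map_C, Polynomial.map_add,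
    Polynomial.eval_mul, Polynomial.eval_pow, Polynomial.eval_C, Polynomial.eval_add, hc,
    mul_zero, zero_add] at this
  rw [← this, sign_mul]
  have hpos : 0 < (e (g.leadingCoeff ^ k)) ^ 2 := by
    rw [map_pow]; positivity
  rw [sign_pos hpos, one_mul]

lemma sgood_main {A : Type*} [CommRing A] [IsDomain A] (e e' : A →+* ℝ)
    (L : Finset (Polynomial A)) : PSat L 0 →
    (∀ g ∈ L, SignType.sign (e g.leadingCoeff) = SignType.sign (e' g.leadingCoeff)) →
    ∀ᶠ M in Filter.atTop, SGood (spair e e' '' (L : Set (Polynomial A))) (-M) M (-M) M := by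
  classical
  induction L using Finset.induction_on_max_value (fun g : Polynomial A => g.degree) with
  | empty =>
    intro _ _
    filter_upwards [Filter.eventually_gt_atTop 0] with M hM
    exact SGood.base _ _ _ _ (by linarith) (by linarith) (by simp)
  | insert f s hfs hmax ih =>
    intro hsat hlc
    have hlc' : ∀ g ∈ s, SignType.sign (e g.leadingCoeff) = SignType.sign (e' g.leadingCoeff) :=
      fun g hg => hlc g (Finset.mem_insert_of_mem hg)
    have hmem : ∀ t ∈ insert f s, t.degree < f.degree → t ∈ s := by
      intro t ht hlt
      rcases Finset.mem_insert.1 ht with rfl | h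
      · exact absurd hlt (lt_irrefl _)
      · exact h
    have hs : PSat s 0 := by
      intro g hg h0
      have hg0 : g ≠ 0 := Polynomial.zero_le_degree_iff.1 (by simpa using h0)
      obtain ⟨a1, a2, a3⟩ := hsat g (Finset.mem_insert_of_mem hg) h0
      refine ⟨hmem _ a1 ((Polynomial.degree_derivative_lt hg0).trans_le (hmax g hg)),
        hmem _ a2 ((Polynomial.degree_eraseLead_lt hg0).trans_le (hmax g hg)), ?_⟩
      intro f' hf' hle
      exact hmem _ (a3 f' (Finset.mem_insert_of_mem hf') hle)
        ((prem_spec f' g hg0).1.trans_le (hmax g hg))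
    have hG := ih hs hlc'
    have himg : spair e e' '' ((insert f s : Finset (Polynomial A)) : Set (Polynomial A)) =
        insert (spair e e' f) (spair e e' '' (s : Set (Polynomial A))) := by
      rw [Finset.coe_insert, Set.image_insert_eq]
    rw [himg]
    by_cases hf0 : f = 0
    · subst hf0
      filter_upwards [hG] with M hM
      exact hM.insert_const _ (by simp [spair])
    obtain ⟨b1, b2, b3⟩ := hsat f (Finset.mem_insert_self _ _)
      (by simpa using Polynomial.zero_le_degree_iff.2 hf0)
    have hsl := hlc f (Finset.mem_insert_self _ _)
    by_cases hl : e f.leadingCoeff = 0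
    · have hl' : e' f.leadingCoeff = 0 := by
        rw [hl, sign_zero] at hsl
        exact sign_eq_zero_iff.1 hsl.symm
      have : spair e e' f ∈ spair e e' '' (s : Set (Polynomial A)) := by
        refine ⟨f.eraseLead, hmem _ b2 (Polynomial.degree_eraseLead_lt hf0), ?_⟩
        rw [spair, map_eraseLead_of e f hl, map_eraseLead_of e' f hl', spair]
      rwa [Set.insert_eq_of_mem this]
    have hl' : e' f.leadingCoeff ≠ 0 := by
      intro h
      rw [h, sign_zero] at hsl
      exact hl (sign_eq_zero_iff.1 hsl)
    have c1 := eventually_sign_atTop (f.map e)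
    have c2 := eventually_sign_atTop (f.map e')
    have c3 := eventually_sign_neg (f.map e)
    have c4 := eventually_sign_neg (f.map e')
    rw [Polynomial.leadingCoeff_map_of_leadingCoeff_ne_zero _ hl] at c1 c3
    rw [Polynomial.leadingCoeff_map_of_leadingCoeff_ne_zero _ hl'] at c2 c4
    rw [Polynomial.natDegree_map_of_leadingCoeff_ne_zero _ hl] at c3
    rw [Polynomial.natDegree_map_of_leadingCoeff_ne_zero _ hl'] at c4
    filter_upwards [hG, c1, c2, c3, c4] with M hM d1 d2 d3 d4
    refine SGood.insert_step _ _ ?_ ?_ hM (by rw [d3, d4, hsl]) (by rw [d1, d2, hsl])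
    · refine ⟨f.derivative, hmem _ b1 (Polynomial.degree_derivative_lt hf0), ?_⟩
      simp [spair, Polynomial.derivative_map]
    · rintro c c' ⟨r, ⟨g, hg, rfl⟩, hr0, hrc⟩ hsg
      obtain ⟨g', hg's, m1, m2, l1, l2⟩ := exists_trunc e e' s hs hlc' (g.natDegree + 1) g
        (Polynomial.degree_le_natDegree.trans_lt (by exact_mod_cast Nat.lt_succ_self _)) hg hr0
      have hg'0 : g' ≠ 0 := by rintro rfl; simp at l1
      have hpm : prem f g' ∈ s := by
        apply hmem
        · exact (hsat g' (Finset.mem_insert_of_mem hg's)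
            (by simpa using Polynomial.zero_le_degree_iff.2 hg'0)).2.2 f
            (Finset.mem_insert_self _ _) (hmax g' hg's)
        · exact (prem_spec f g' hg'0).1.trans_le (hmax g' hg's)
      have hc : (g'.map e).eval c = 0 := by rw [m1]; exact hrc
      have hc' : (g'.map e').eval c' = 0 := by
        have := hsg _ ⟨g', hg's, rfl⟩
        simp only [spair] at this
        rw [hc, sign_zero] at this
        exact sign_eq_zero_iff.1 this.symm
      rw [sign_prem e f g' hg'0 l1 c hc, sign_prem e' f g' hg'0 l2 c' hc']
      exact hsg _ ⟨_, hpm, rfl⟩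

/-- Semi-algebraic sets, described as sets saturated with respect to the signs of finitely
many polynomials. -/
def SA {σ : Type*} (S : (σ → ℝ) → Prop) : Prop :=
  ∃ G : Finset (MvPolynomial σ ℝ), ∀ y y' : σ → ℝ,
    (∀ g ∈ G, SignType.sign (MvPolynomial.eval y g) = SignType.sign (MvPolynomial.eval y' g)) →
    S y → S y'

/-- Tarski-Seidenberg. -/
lemma SA.ex_option {σ : Type*} {S : (Option σ → ℝ) → Prop} (h : SA S) :
    SA (fun y : σ → ℝ => ∃ r : ℝ, S (fun o => o.elim r y)) := by
  classical
  obtain ⟨G, hG⟩ := h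
  obtain ⟨L, hL, hsat⟩ := exists_psat' (G.image (MvPolynomial.optionEquivLeft ℝ σ))
  refine ⟨L.image Polynomial.leadingCoeff, ?_⟩
  rintro y y' hyy ⟨r, hr⟩
  have hM := sgood_main (MvPolynomial.eval y) (MvPolynomial.eval y') L hsat
    (fun g hg => hyy _ (Finset.mem_image_of_mem _ hg))
  obtain ⟨M, h1, h2⟩ := (hM.and (Filter.eventually_gt_atTop |r|)).exists
  obtain ⟨r', hr'⟩ := h1.exists_match r (by rwa [Set.mem_Ioo, ← abs_lt])
  refine ⟨r', hG _ _ ?_ hr⟩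
  intro g hg
  have := hr' _ ⟨_, hL (Finset.mem_image_of_mem _ hg), rfl⟩
  simp only [spair] at this
  rw [MvPolynomial.optionEquivLeft_elim_eval, MvPolynomial.optionEquivLeft_elim_eval]
  exact this

lemma SA.not {σ : Type*} {S : (σ → ℝ) → Prop} (h : SA S) : SA (fun y => ¬ S y) := by
  obtain ⟨G, hG⟩ := h
  exact ⟨G, fun y y' hs hy hy' => hy (hG y' y (fun g hg => (hs g hg).symm) hy')⟩

lemma SA.and {σ : Type*} {S T : (σ → ℝ) → Prop} (h : SA S) (h' : SA T) :
    SA (fun y => S y ∧ T y) := by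
  classical
  obtain ⟨G, hG⟩ := h
  obtain ⟨H, hH⟩ := h'
  exact ⟨G ∪ H, fun y y' hs hy => ⟨hG y y' (fun g hg => hs g (Finset.mem_union_left _ hg)) hy.1,
    hH y y' (fun g hg => hs g (Finset.mem_union_right _ hg)) hy.2⟩⟩

lemma SA.imp {σ : Type*} {S T : (σ → ℝ) → Prop} (h : SA S) (h' : SA T) :
    SA (fun y => S y → T y) := by
  have := (h.and h'.not).not
  simpa using this

lemma SA.le {σ : Type*} (p q : MvPolynomial σ ℝ) :
    SA (fun y => MvPolynomial.eval y p ≤ MvPolynomial.eval y q) := by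
  refine ⟨{q - p}, fun y y' hs hy => ?_⟩
  have := hs _ (Finset.mem_singleton_self _)
  beta_reduce at hy ⊢
  rw [← sub_nonneg, ← map_sub, ← sign_nonneg_iff] at hy ⊢
  rwa [← this]

lemma SA.comp {σ τ : Type*} {S : (τ → ℝ) → Prop} (h : SA S) (t : τ → MvPolynomial σ ℝ) :
    SA (fun y : σ → ℝ => S (fun j => MvPolynomial.eval y (t j))) := by
  classical
  obtain ⟨G, hG⟩ := h
  refine ⟨G.image (MvPolynomial.bind₁ t), fun y y' hs hy => hG _ _ ?_ hy⟩
  intro g hg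
  have := hs _ (Finset.mem_image_of_mem _ hg)
  have key : ∀ y : σ → ℝ, MvPolynomial.eval y (MvPolynomial.bind₁ t g) =
      MvPolynomial.eval (fun j => MvPolynomial.eval y (t j)) g := by
    intro y
    simp only [MvPolynomial.eval, MvPolynomial.eval₂Hom_bind₁]
  rwa [key, key] at this

lemma SA.ex_fin {σ : Type*} : ∀ (m : ℕ) {S : (σ ⊕ Fin m → ℝ) → Prop}, SA S →
    SA (fun y : σ → ℝ => ∃ v : Fin m → ℝ, S (Sum.elim y v)) := by
  intro m
  induction m with
  | zero =>
    intro S h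
    have := h.comp (fun j : σ ⊕ Fin 0 => j.elim MvPolynomial.X (fun i => i.elim0))
    convert this using 2 with y
    have : ∀ v : Fin 0 → ℝ, (Sum.elim y v) = fun j : σ ⊕ Fin 0 => MvPolynomial.eval y
        (j.elim MvPolynomial.X (fun i => i.elim0) : MvPolynomial σ ℝ) := by
      intro v; ext j
      rcases j with j | j
      · simp
      · exact j.elim0
    constructor
    · rintro ⟨v, hv⟩; rwa [this v] at hv
    · intro hv; refine ⟨fun i => i.elim0, ?_⟩; rwa [this]
  | succ m ih =>
    intro S h
    have h1 := h.comp (fun j : σ ⊕ Fin (m + 1) => (j.elim (fun i => MvPolynomial.X (some (Sum.inl i)))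
      (fun i => Fin.cases (MvPolynomial.X none) (fun i => MvPolynomial.X (some (Sum.inr i))) i) :
        MvPolynomial (Option (σ ⊕ Fin m)) ℝ))
    have h2 := ih h1.ex_option
    convert h2 using 2 with y
    have key : ∀ (r : ℝ) (v : Fin m → ℝ), (fun j : σ ⊕ Fin (m + 1) =>
        MvPolynomial.eval (fun o : Option (σ ⊕ Fin m) => o.elim r (Sum.elim y v))
        (j.elim (fun i => MvPolynomial.X (some (Sum.inl i)))
      (fun i => Fin.cases (MvPolynomial.X none) (fun i => MvPolynomial.X (some (Sum.inr i))) i) :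
        MvPolynomial (Option (σ ⊕ Fin m)) ℝ)) = Sum.elim y (Fin.cons r v : Fin (m + 1) → ℝ) := by
      intro r v; ext j
      rcases j with j | j
      · simp
      · refine Fin.cases ?_ (fun i => ?_) j <;> simp
    constructor
    · rintro ⟨v, hv⟩
      refine ⟨Fin.tail v, v 0, ?_⟩
      rw [key, Fin.cons_self_tail]; exact hv
    · rintro ⟨v, r, hv⟩
      rw [key] at hv
      exact ⟨_, hv⟩

lemma SA.all_fin {σ : Type*} (m : ℕ) {S : (σ ⊕ Fin m → ℝ) → Prop} (h : SA S) :
    SA (fun y : σ → ℝ => ∀ v : Fin m → ℝ, S (Sum.elim y v)) := by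
  have := (SA.ex_fin m h.not).not
  simpa using this

lemma IsSemialgebraic.sa {n : ℕ} {S : Set (Fin n → ℝ)} (h : IsSemialgebraic S) :
    SA (fun y => y ∈ S) := by
  classical
  obtain ⟨N, T, hT, rfl⟩ := h
  choose m P Q hPQ using hT
  refine ⟨Finset.univ.biUnion (fun k => insert (Q k) (Finset.univ.image (P k))), ?_⟩
  intro y y' hs hy
  obtain ⟨k, hk⟩ := Set.mem_iUnion.1 hy
  refine Set.mem_iUnion.2 ⟨k, ?_⟩
  rw [hPQ k] at hk ⊢
  constructor
  · intro i
    rw [← sign_eq_one_iff, ← hs (P k i) (by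
      simp only [Finset.mem_biUnion]; exact ⟨k, Finset.mem_univ _, by simp⟩), sign_eq_one_iff]
    exact hk.1 i
  · rw [← sign_eq_zero_iff, ← hs (Q k) (by
      simp only [Finset.mem_biUnion]; exact ⟨k, Finset.mem_univ _, by simp⟩), sign_eq_zero_iff]
    exact hk.2

lemma SA.isSemialgebraic {n : ℕ} {S : Set (Fin n → ℝ)} (h : SA (fun y => y ∈ S)) :
    IsSemialgebraic S := by
  classical
  obtain ⟨G, hG⟩ := h
  let I := {s : G → SignType // ∃ y ∈ S, ∀ g : G, SignType.sign (MvPolynomial.eval y g.1) = s g}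
  let eI := Fintype.equivFin I
  let eG := Fintype.equivFin G
  refine ⟨Fintype.card I, fun k => {x | ∀ g : G,
    SignType.sign (MvPolynomial.eval x g.1) = (eI.symm k).1 g}, ?_, ?_⟩
  · intro k
    beta_reduce
    generalize (eI.symm k).1 = s
    refine ⟨Fintype.card G, fun i => if s (eG.symm i) = 1 then (eG.symm i).1 else
      if s (eG.symm i) = -1 then -(eG.symm i).1 else 1,
      ∑ g : G, if s g = 0 then g.1 ^ 2 else 0, ?_⟩
    ext x
    simp only [Set.mem_ofPred_eq]
    have e1 : (∀ i, 0 < MvPolynomial.eval x (if s (eG.symm i) = 1 then (eG.symm i).1 else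
      if s (eG.symm i) = -1 then -(eG.symm i).1 else 1)) ↔ ∀ g : G, 0 < MvPolynomial.eval x
      (if s g = 1 then g.1 else if s g = -1 then -g.1 else 1) :=
      eG.symm.forall_congr (fun i => Iff.rfl)
    have e2 : MvPolynomial.eval x (∑ g : G, if s g = 0 then g.1 ^ 2 else 0) = 0 ↔
        ∀ g : G, s g = 0 → MvPolynomial.eval x g.1 = 0 := by
      rw [map_sum, Finset.sum_eq_zero_iff_of_nonneg]
      · simp only [Finset.mem_univ, true_implies]
        refine forall_congr' fun g => ?_
        split_ifs with h <;> simp [h]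
      · intro g _
        split_ifs
        · rw [map_pow]; positivity
        · simp
    rw [e1, e2, ← forall_and]
    refine forall_congr' fun g => ?_
    rcases hsg : s g with _ | _ | _
    · simp [sign_eq_zero_iff]
    · have : SignType.neg = -1 := rfl
      simp [this, sign_eq_neg_one_iff]
    · have : SignType.pos = 1 := rfl
      simp [this, sign_eq_one_iff]
  · ext y
    simp only [Set.mem_iUnion, Set.mem_ofPred_eq]
    constructor
    · intro hy
      exact ⟨eI ⟨fun g => SignType.sign (MvPolynomial.eval y g.1), y, hy, fun _ => rfl⟩,
        fun g => by simp⟩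
    · rintro ⟨k, hk⟩
      obtain ⟨z, hz, hzs⟩ := (eI.symm k).2
      exact hG z y (fun g hg => by rw [hzs ⟨g, hg⟩, hk ⟨g, hg⟩]) hz

lemma SA.graph {n : ℕ} {ν : (Fin n → ℝ) → ℝ} (h : IsSemialgebraicFn ν) {σ : Type*}
    (t : Fin n → MvPolynomial σ ℝ) (u : MvPolynomial σ ℝ) :
    SA (fun y : σ → ℝ => MvPolynomial.eval y u = ν (fun i => MvPolynomial.eval y (t i))) := by
  have h1 := (IsSemialgebraic.sa h).comp (Fin.snoc t u : Fin (n + 1) → MvPolynomial σ ℝ)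
  convert h1 using 2 with y
  have key : (fun j => MvPolynomial.eval y ((Fin.snoc t u : Fin (n + 1) → MvPolynomial σ ℝ) j)) =
      (Fin.snoc (fun i => MvPolynomial.eval y (t i)) (MvPolynomial.eval y u) :
        Fin (n + 1) → ℝ) := by
    ext j
    refine Fin.lastCases ?_ (fun i => ?_) j <;> simp
  rw [key]
  constructor
  · intro h
    exact ⟨_, by rw [h]⟩
  · rintro ⟨x, hx⟩
    have h2 : (fun i => MvPolynomial.eval y (t i)) = x := by
      ext i
      simpa using congrFun hx i.castSucc
    have h3 := congrFun hx (Fin.last n)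
    simp only [Fin.snoc_last] at h3
    rw [h3, h2]

lemma SA.nu_le {n : ℕ} {ν : (Fin n → ℝ) → ℝ} (h : IsSemialgebraicFn ν) {σ : Type*}
    (t s : Fin n → MvPolynomial σ ℝ) :
    SA (fun y : σ → ℝ => ν (fun i => MvPolynomial.eval y (t i)) ≤
      ν (fun i => MvPolynomial.eval y (s i))) := by
  have h1 := SA.graph h (fun i => MvPolynomial.rename (Sum.inl : σ → σ ⊕ Fin 2) (t i))
    (MvPolynomial.X (Sum.inr 0))
  have h2 := SA.graph h (fun i => MvPolynomial.rename (Sum.inl : σ → σ ⊕ Fin 2) (s i))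
    (MvPolynomial.X (Sum.inr 1))
  have h3 := SA.le (MvPolynomial.X (Sum.inr 0) : MvPolynomial (σ ⊕ Fin 2) ℝ)
    (MvPolynomial.X (Sum.inr 1))
  have h4 := SA.ex_fin 2 ((h1.and h2).and h3)
  convert h4 using 2 with y
  simp only [MvPolynomial.eval_rename, MvPolynomial.eval_X, Sum.elim_inr, Sum.elim_comp_inl]
  constructor
  · intro h
    exact ⟨![ν (fun i => MvPolynomial.eval y (t i)), ν (fun i => MvPolynomial.eval y (s i))],
      by simpa using h⟩
  · rintro ⟨v, ⟨e1, e2⟩, e3⟩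
    rwa [e1, e2] at e3

/-- `z` is a best approximation of `x` in `C`. -/
def BestA {n : ℕ} (ν : (Fin n → ℝ) → ℝ) (C : Set (Fin n → ℝ)) (x z : Fin n → ℝ) : Prop :=
  z ∈ C ∧ ∀ w, w ∈ C → ν (x - z) ≤ ν (x - w)

lemma SA.best {n : ℕ} {ν : (Fin n → ℝ) → ℝ} (h : IsSemialgebraicFn ν) {C : Set (Fin n → ℝ)}
    (hC : IsSemialgebraic C) {σ : Type*} (t s : Fin n → MvPolynomial σ ℝ) :
    SA (fun y : σ → ℝ => BestA ν C (fun i => MvPolynomial.eval y (t i))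
      (fun i => MvPolynomial.eval y (s i))) := by
  have h1 := hC.sa.comp s
  have h2 := hC.sa.comp (fun i => (MvPolynomial.X (Sum.inr i) : MvPolynomial (σ ⊕ Fin n) ℝ))
  have h3 := SA.nu_le h
    (fun i => MvPolynomial.rename (Sum.inl : σ → σ ⊕ Fin n) (t i - s i))
    (fun i => MvPolynomial.rename (Sum.inl : σ → σ ⊕ Fin n) (t i) - MvPolynomial.X (Sum.inr i))
  have h4 := h1.and (SA.all_fin n (h2.imp h3))
  convert h4 using 2 with y
  simp only [MvPolynomial.eval_rename, MvPolynomial.eval_X, Sum.elim_inr, Sum.elim_comp_inl,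
    map_sub]
  rfl

lemma omega_semialgebraic {n : ℕ} {ν : (Fin n → ℝ) → ℝ} (h : IsSemialgebraicFn ν)
    (hν_eq : ∀ x, ν x = 0 ↔ x = 0) (hν0 : ∀ x, 0 ≤ ν x) {C : Set (Fin n → ℝ)}
    (hC : IsSemialgebraic C) :
    IsSemialgebraicProd {p : (Fin n → ℝ) × (Fin n → ℝ) | BestA ν C p.1 p.2 ∧
      ∀ w, BestA ν C p.1 w → w = p.2} := by
  apply SA.isSemialgebraic
  have h1 := SA.best h hC (fun i => (MvPolynomial.X (Fin.castAdd n i) : MvPolynomial (Fin (n + n)) ℝ))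
    (fun i => (MvPolynomial.X (Fin.natAdd n i) : MvPolynomial (Fin (n + n)) ℝ))
  have h2 := SA.best h hC
    (fun i => (MvPolynomial.X (Sum.inl (Fin.castAdd n i)) : MvPolynomial (Fin (n + n) ⊕ Fin n) ℝ))
    (fun i => (MvPolynomial.X (Sum.inr i) : MvPolynomial (Fin (n + n) ⊕ Fin n) ℝ))
  have h3 := SA.nu_le h
    (fun i => (MvPolynomial.X (Sum.inr i) - MvPolynomial.X (Sum.inl (Fin.natAdd n i)) :
      MvPolynomial (Fin (n + n) ⊕ Fin n) ℝ)) (fun i => 0)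
  have h4 := h1.and (SA.all_fin n (h2.imp h3))
  convert h4 using 2 with y
  simp only [MvPolynomial.eval_X, Sum.elim_inr, Sum.elim_inl, map_sub, map_zero]
  have e0 : ν (fun _ : Fin n => (0 : ℝ)) = 0 := (hν_eq _).2 rfl
  have key : ∀ w z : Fin n → ℝ, ν (fun i => w i - z i) ≤ ν (fun _ : Fin n => (0 : ℝ)) ↔ w = z := by
    intro w z
    rw [e0]
    constructor
    · intro hle
      have := (hν_eq _).1 (le_antisymm hle (hν0 _))
      ext i
      have := congrFun this i
      simpa [sub_eq_zero] using this
    · rintro rfl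
      rw [← e0]; simp
  constructor
  · rintro ⟨⟨x, z⟩, ⟨hp1, hp2⟩, rfl⟩
    simp only [Fin.append_left, Fin.append_right]
    exact ⟨hp1, fun w hw => (key w z).2 (hp2 w hw)⟩
  · rintro ⟨a1, a2⟩
    refine ⟨(fun i => y (Fin.castAdd n i), fun i => y (Fin.natAdd n i)), ⟨a1, ?_⟩, ?_⟩
    · exact fun w hw => (key w _).1 (a2 w hw)
    · ext i
      refine Fin.addCases (fun i => ?_) (fun i => ?_) i
      · rw [Fin.append_left]
      · rw [Fin.append_right]

section NormFacts
variable {n : ℕ} {ν : (Fin n → ℝ) → ℝ}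

lemma nu_nonneg (hν_smul : ∀ (c : ℝ) (x), ν (c • x) = |c| * ν x)
    (hν_add : ∀ x y, ν (x + y) ≤ ν x + ν y) (x : Fin n → ℝ) : 0 ≤ ν x := by
  have h1 := hν_add x ((-1 : ℝ) • x)
  have h2 := hν_smul (-1) x
  have h3 := hν_smul 0 0
  simp only [zero_smul, abs_zero, zero_mul] at h3
  rw [h2] at h1
  simp [h3] at h1
  linarith

lemma nu_continuous (hν_smul : ∀ (c : ℝ) (x), ν (c • x) = |c| * ν x)
    (hν_add : ∀ x y, ν (x + y) ≤ ν x + ν y) : Continuous ν := by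
  have hn := nu_nonneg hν_smul hν_add
  have h0 : ν 0 = 0 := by simpa using hν_smul 0 0
  have hneg : ∀ x, ν (-x) = ν x := fun x => by simpa using hν_smul (-1) x
  have hsum : ∀ (s : Finset (Fin n)) (f : Fin n → (Fin n → ℝ)),
      ν (∑ i ∈ s, f i) ≤ ∑ i ∈ s, ν (f i) := by
    intro s f
    exact Finset.le_sum_of_subadditive ν h0.le hν_add s f
  have hb : ∀ x, ν x ≤ (∑ i, ν (Pi.single i (1 : ℝ))) * ‖x‖ := by
    intro x
    conv_lhs => rw [pi_eq_sum_univ' x]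
    refine (hsum _ _).trans ?_
    rw [Finset.sum_mul]
    refine Finset.sum_le_sum fun i _ => ?_
    rw [hν_smul, mul_comm]
    refine mul_le_mul ?_ (norm_le_pi_norm x i) (abs_nonneg _) (hn _)
    apply le_of_eq
    congr 1
  have hK : 0 ≤ ∑ i, ν (Pi.single i (1 : ℝ)) := Finset.sum_nonneg fun i _ => hn _
  have : LipschitzWith ⟨_, hK⟩ ν := by
    apply LipschitzWith.of_le_add_mul
    intro x y
    have h1 := hν_add y (x - y)
    rw [add_sub_cancel] at h1
    have h2 := hb (x - y)
    rw [dist_eq_norm]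
    exact h1.trans (by gcongr; exact h2)
  exact this.continuous

lemma nu_coercive (hν_eq : ∀ x, ν x = 0 ↔ x = 0)
    (hν_smul : ∀ (c : ℝ) (x), ν (c • x) = |c| * ν x)
    (hν_add : ∀ x y, ν (x + y) ≤ ν x + ν y) : ∃ c > 0, ∀ x, c * ‖x‖ ≤ ν x := by
  have hn := nu_nonneg hν_smul hν_add
  have hc := nu_continuous hν_smul hν_add
  rcases (Metric.sphere (0 : Fin n → ℝ) 1).eq_empty_or_nonempty with he | hne
  · refine ⟨1, one_pos, fun x => ?_⟩
    by_cases hx : x = 0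
    · simp [hx, (hν_eq 0).2 rfl]
    · exfalso
      have : ‖x‖⁻¹ • x ∈ Metric.sphere (0 : Fin n → ℝ) 1 := by
        simp [norm_smul, hx]
      simp [he] at this
  · obtain ⟨m, hm, hmin⟩ := (isCompact_sphere (0 : Fin n → ℝ) 1).exists_isMinOn hne hc.continuousOn
    have hm0 : m ≠ 0 := by rintro rfl; simp at hm
    refine ⟨ν m, lt_of_le_of_ne (hn m) (fun h => hm0 ((hν_eq m).1 h.symm)), fun x => ?_⟩
    by_cases hx : x = 0
    · simp [hx, hn]
    · have hmem : ‖x‖⁻¹ • x ∈ Metric.sphere (0 : Fin n → ℝ) 1 := by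
        simp [norm_smul, hx]
      have h1 : ν m ≤ ν (‖x‖⁻¹ • x) := hmin hmem
      rw [hν_smul, abs_of_nonneg (by positivity)] at h1
      have hp : 0 < ‖x‖ := norm_pos_iff.2 hx
      calc ν m * ‖x‖ ≤ (‖x‖⁻¹ * ν x) * ‖x‖ := by gcongr
        _ = ν x := by field_simp

lemma best_exists (hν_eq : ∀ x, ν x = 0 ↔ x = 0)
    (hν_smul : ∀ (c : ℝ) (x), ν (c • x) = |c| * ν x)
    (hν_add : ∀ x y, ν (x + y) ≤ ν x + ν y) {C : Set (Fin n → ℝ)} (hne : C.Nonempty)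
    (hcl : IsClosed C) (x : Fin n → ℝ) : ∃ z, BestA ν C x z := by
  obtain ⟨c, hc, hcx⟩ := nu_coercive hν_eq hν_smul hν_add
  have hcont := nu_continuous hν_smul hν_add
  obtain ⟨z0, hz0⟩ := hne
  have ht : Filter.Tendsto (fun y : Fin n → ℝ => c * (‖y‖ - ‖x‖)) (Filter.cocompact _)
      Filter.atTop := by
    apply Filter.Tendsto.const_mul_atTop hc
    exact Filter.tendsto_atTop_add_const_right _ _ tendsto_norm_cocompact_atTop
  have hf : Continuous (fun y => ν (x - y)) := hcont.comp (continuous_const.sub continuous_id)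
  obtain ⟨z, hz, hmin⟩ := hf.continuousOn.exists_isMinOn' hcl hz0 (by
    apply Filter.Eventually.filter_mono inf_le_left
    filter_upwards [ht.eventually_ge_atTop (ν (x - z0))] with y hy
    refine hy.trans (le_trans ?_ (hcx (x - y)))
    gcongr
    rw [norm_sub_rev]
    exact norm_sub_norm_le y x)
  exact ⟨z, hz, fun w hw => hmin hw⟩

lemma best_iff (hν_smul : ∀ (c : ℝ) (x), ν (c • x) = |c| * ν x)
    (hν_add : ∀ x y, ν (x + y) ≤ ν x + ν y) {C : Set (Fin n → ℝ)} (x z : Fin n → ℝ) :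
    BestA ν C x z ↔ z ∈ C ∧ ν (x - z) = distNu ν C x := by
  have hn := nu_nonneg hν_smul hν_add
  constructor
  · rintro ⟨hz, hmin⟩
    refine ⟨hz, ?_⟩
    have : IsLeast ((fun y => ν (x - y)) '' C) (ν (x - z)) :=
      ⟨⟨z, hz, rfl⟩, by rintro _ ⟨w, hw, rfl⟩; exact hmin w hw⟩
    exact this.csInf_eq.symm
  · rintro ⟨hz, he⟩
    refine ⟨hz, fun w hw => ?_⟩
    rw [he]
    exact csInf_le ⟨0, by rintro _ ⟨w, hw, rfl⟩; exact hn _⟩ ⟨w, hw, rfl⟩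

lemma nu_strict (hν_eq : ∀ x, ν x = 0 ↔ x = 0)
    (hν_smul : ∀ (c : ℝ) (x), ν (c • x) = |c| * ν x)
    (hν_add : ∀ x y, ν (x + y) ≤ ν x + ν y)
    (hd : ∀ x : Fin n → ℝ, x ≠ 0 → DifferentiableAt ℝ (dualNu ν) x)
    (u v : Fin n → ℝ) (hu : u ≠ 0) (hv : v ≠ 0) (huv : ν (u + v) = ν u + ν v) :
    (ν u)⁻¹ • u = (ν v)⁻¹ • v := by
  have hn := nu_nonneg hν_smul hν_add
  obtain ⟨c, hc, hcx⟩ := nu_coercive hν_eq hν_smul hν_add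
  have hpos : ∀ x, x ≠ 0 → 0 < ν x := fun x hx =>
    lt_of_le_of_ne (hn x) (fun h => hx ((hν_eq x).1 h.symm))
  have hup := hpos u hu
  have hvp := hpos v hv
  have hw : u + v ≠ 0 := by
    intro h; rw [h, (hν_eq 0).2 rfl] at huv; linarith
  -- Hahn-Banach
  obtain ⟨g, hg1, hg2⟩ := exists_extension_of_le_sublinear
    (LinearPMap.mkSpanSingleton (K := ℝ) (u + v) (ν (u + v)) hw) ν
    (fun c hc x => by rw [hν_smul, abs_of_pos hc]) hν_add (by
      rintro ⟨x, hx⟩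
      obtain ⟨a, rfl⟩ := Submodule.mem_span_singleton.1 hx
      rw [LinearPMap.mkSpanSingleton'_apply]
      simp only [hν_smul, smul_eq_mul, RingHom.id_apply]
      exact mul_le_mul_of_nonneg_right (le_abs_self a) (hn _))
  have hgw : g (u + v) = ν (u + v) := by
    have := hg1 ⟨u + v, Submodule.mem_span_singleton_self _⟩
    rw [LinearPMap.mkSpanSingleton_apply] at this
    exact this
  have hgu : g u = ν u := by
    have h1 := hg2 u; have h2 := hg2 v
    rw [map_add] at hgw; linarith
  have hgv : g v = ν v := by
    have h1 := hg2 u; have h2 := hg2 v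
    rw [map_add] at hgw; linarith
  set y : Fin n → ℝ := fun i => g (Pi.single i 1) with hy
  have hgy : ∀ x, g x = ∑ i, x i * y i := by
    intro x
    have : x = ∑ i, x i • (Pi.single i (1 : ℝ) : Fin n → ℝ) := by
      ext j; simp [Finset.sum_apply, Pi.single_apply]
    conv_lhs => rw [this]
    simp [map_sum, hy]
  have hy0 : y ≠ 0 := by
    intro h
    have := hgy u
    rw [h, hgu] at this
    simp at this
    exact hup.ne' this
  have hbdd : ∀ y' : Fin n → ℝ, BddAbove ((fun x : Fin n → ℝ => ∑ i, x i * y' i) '' {x | ν x ≤ 1}) := by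
    intro y'
    refine ⟨∑ i, c⁻¹ * |y' i|, ?_⟩
    rintro _ ⟨x, hx, rfl⟩
    refine Finset.sum_le_sum fun i _ => ?_
    refine (le_abs_self _).trans ?_
    rw [abs_mul]
    gcongr
    have h1 : |x i| ≤ ‖x‖ := norm_le_pi_norm x i
    have h2 := (hcx x).trans hx
    have h3 : ‖x‖ ≤ c⁻¹ := by
      rw [inv_eq_one_div, le_div_iff₀ hc]; linarith
    exact h1.trans h3
  have hdual : dualNu ν y ≤ 1 := by
    apply csSup_le
    · exact ⟨_, 0, by simp [(hν_eq 0).2 rfl], rfl⟩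
    · rintro _ ⟨x, hx, rfl⟩
      have h1 := hg2 x
      rw [hgy x] at h1
      exact h1.trans hx
  have key : ∀ a : Fin n → ℝ, 0 < ν a → g a = ν a → ∀ i,
      fderiv ℝ (dualNu ν) y (Pi.single i 1) = ((ν a)⁻¹ • a) i := by
    intro a ha hga i
    set b := (ν a)⁻¹ • a with hb
    have hνb : ν b ≤ 1 := by
      rw [hb, hν_smul, abs_of_pos (by positivity)]; apply le_of_eq; field_simp
    have hgb : g b = 1 := by
      rw [hb, map_smul, hga, smul_eq_mul]; field_simp
    let ℓ : (Fin n → ℝ) →L[ℝ] ℝ := ∑ i, b i • ContinuousLinearMap.proj (R := ℝ) i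
    have hℓ : ∀ x, ℓ x = ∑ i, b i * x i := by intro x; simp [ℓ]
    have hmin : IsLocalMin (fun x => dualNu ν x - ℓ x) y := by
      apply Filter.Eventually.of_forall
      intro x
      have h1 : ℓ x ≤ dualNu ν x := by
        rw [hℓ]; exact le_csSup (hbdd x) ⟨b, hνb, rfl⟩
      have h2 : ℓ y = 1 := by rw [hℓ, ← hgy, hgb]
      simp only
      linarith
    have hder : HasFDerivAt (fun x => dualNu ν x - ℓ x) (fderiv ℝ (dualNu ν) y - ℓ) y :=
      (hd y hy0).hasFDerivAt.sub ℓ.hasFDerivAt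
    have := hmin.hasFDerivAt_eq_zero hder
    have h3 := congrArg (fun T : (Fin n → ℝ) →L[ℝ] ℝ => T (Pi.single i 1)) this
    simp only [sub_apply, zero_apply, hℓ] at h3
    rw [sub_eq_zero.1 h3]
    simp [Pi.single_apply]
  ext i
  rw [← key u hup hgu i, ← key v hvp hgv i]

lemma best_unique (hν_eq : ∀ x, ν x = 0 ↔ x = 0)
    (hν_smul : ∀ (c : ℝ) (x), ν (c • x) = |c| * ν x)
    (hν_add : ∀ x y, ν (x + y) ≤ ν x + ν y)
    (hd : ∀ x : Fin n → ℝ, x ≠ 0 → DifferentiableAt ℝ (dualNu ν) x)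
    {C : Set (Fin n → ℝ)} (x z : Fin n → ℝ) (hz : BestA ν C x z) (t : ℝ) (ht0 : 0 < t)
    (ht1 : t < 1) : BestA ν C (x + t • (z - x)) z ∧
      ∀ w, BestA ν C (x + t • (z - x)) w → w = z := by
  have hn := nu_nonneg hν_smul hν_add
  have e1 : x - (x + t • (z - x)) = t • (x - z) := by
    rw [smul_sub, smul_sub]; abel
  have e2 : (x + t • (z - x)) - z = (1 - t) • (x - z) := by
    rw [sub_smul, one_smul, smul_sub, smul_sub]; abel
  have n2 : ν ((x + t • (z - x)) - z) = (1 - t) * ν (x - z) := by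
    rw [e2, hν_smul, abs_of_pos (by linarith)]
  have tri : ∀ w, ν (x - w) ≤ t * ν (x - z) + ν ((x + t • (z - x)) - w) := by
    intro w
    have := hν_add (t • (x - z)) ((x + t • (z - x)) - w)
    have e3 : t • (x - z) + ((x + t • (z - x)) - w) = x - w := by rw [← e1]; abel
    rwa [e3, hν_smul, abs_of_pos ht0] at this
  have hb : BestA ν C (x + t • (z - x)) z := by
    refine ⟨hz.1, fun w hw => ?_⟩
    have h1 := tri w
    have h2 := hz.2 w hw
    rw [n2]; linarith
  refine ⟨hb, fun w hw => ?_⟩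
  have h1 := tri w
  have h2 := hz.2 w hw.1
  have h3 := hw.2 z hz.1
  have h4 := hb.2 w hw.1
  have n3 : ν ((x + t • (z - x)) - w) = (1 - t) * ν (x - z) := by rw [← n2]; linarith
  by_cases hxz : x = z
  · subst hxz
    have : ν ((x + t • (x - x)) - w) = 0 := by rw [n3]; simp [(hν_eq 0).2 rfl]
    rw [hν_eq] at this
    simp [sub_eq_zero] at this
    exact this.symm
  have hxz' : x - z ≠ 0 := sub_ne_zero.2 hxz
  have hD : 0 < ν (x - z) := lt_of_le_of_ne (hn _) (fun h => hxz' ((hν_eq _).1 h.symm))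
  have n1 : ν (t • (x - z)) = t * ν (x - z) := by rw [hν_smul, abs_of_pos ht0]
  have hu : t • (x - z) ≠ 0 := smul_ne_zero ht0.ne' hxz'
  have h1t : 0 < 1 - t := by linarith
  have hv : (x + t • (z - x)) - w ≠ 0 := by
    intro h
    rw [h, (hν_eq 0).2 rfl] at n3
    have := mul_pos h1t hD
    linarith
  have hsum : t • (x - z) + ((x + t • (z - x)) - w) = x - w := by rw [← e1]; abel
  have := nu_strict hν_eq hν_smul hν_add hd _ _ hu hv (by
    rw [hsum, n1, n3]; rw [n3] at h1; linarith)
  rw [n1, n3, smul_smul] at this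
  have h5 : (x + t • (z - x)) - w = (x + t • (z - x)) - z := by
    rw [e2]
    have := congrArg (fun q => ((1 - t) * ν (x - z)) • q) this
    simp only [smul_smul] at this
    rw [mul_inv_cancel₀ (mul_pos h1t hD).ne', one_smul] at this
    rw [← this]
    congr 1
    field_simp
  exact sub_right_injective h5

end NormFacts

/-- With `C`, `ν` as in Theorem `stmt10` and `S(C)` the set of points without a unique
best `ν`-approximation, the set `Ω_ν(C) = {(x,z) : x ∉ S(C), z ∈ C, distNu ν C x = ν(x−z)}`
is semi-algebraic, and its projection onto the first factor is `ℝⁿ \ S(C)`, a dense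
subset of `ℝⁿ`. -/
theorem stmt11 {n : ℕ} (C : Set (Fin n → ℝ))
    (hCne : C.Nonempty) (hCcl : IsClosed C) (hCsa : IsSemialgebraic C)
    (ν : (Fin n → ℝ) → ℝ)
    (hν_eq : ∀ x, ν x = 0 ↔ x = 0)
    (hν_smul : ∀ (c : ℝ) (x), ν (c • x) = |c| * ν x)
    (hν_add : ∀ x y, ν (x + y) ≤ ν x + ν y)
    (hν_sa : IsSemialgebraicFn ν)
    (hν_diff : ∀ x : Fin n → ℝ, x ≠ 0 → DifferentiableAt ℝ ν x)
    (hν_star_diff : ∀ x : Fin n → ℝ, x ≠ 0 → DifferentiableAt ℝ (dualNu ν) x)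
    (S : Set (Fin n → ℝ))
    (hS : S = {x | ¬ ∃! z, z ∈ C ∧ ν (x - z) = distNu ν C x})
    (Ω : Set ((Fin n → ℝ) × (Fin n → ℝ)))
    (hΩ : Ω = {p | p.1 ∉ S ∧ p.2 ∈ C ∧ distNu ν C p.1 = ν (p.1 - p.2)}) :
    IsSemialgebraicProd Ω ∧ Prod.fst '' Ω = Sᶜ ∧ Dense Sᶜ := by
  have hn := nu_nonneg hν_smul hν_add
  have hbi := best_iff (C := C) hν_smul hν_add
  have hSc : ∀ x, x ∉ S ↔ ∃ z, BestA ν C x z ∧ ∀ w, BestA ν C x w → w = z := by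
    intro x
    rw [hS, Set.mem_ofPred_eq, not_not]
    simp only [ExistsUnique, hbi]
  have hΩ' : Ω = {p | BestA ν C p.1 p.2 ∧ ∀ w, BestA ν C p.1 w → w = p.2} := by
    rw [hΩ]
    ext p
    simp only [Set.mem_ofPred_eq, hSc]
    constructor
    · rintro ⟨⟨z, hz, hu⟩, h1, h2⟩
      have hp : BestA ν C p.1 p.2 := (hbi _ _).2 ⟨h1, h2.symm⟩
      refine ⟨hp, fun w hw => ?_⟩
      rw [hu w hw, hu _ hp]
    · rintro ⟨h1, h2⟩
      have := (hbi _ _).1 h1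
      exact ⟨⟨p.2, h1, h2⟩, this.1, this.2.symm⟩
  refine ⟨?_, ?_, ?_⟩
  · rw [hΩ']
    exact omega_semialgebraic hν_sa hν_eq hn hCsa
  · rw [hΩ']
    ext x
    rw [Set.mem_compl_iff, hSc]
    constructor
    · rintro ⟨p, hp, rfl⟩
      exact ⟨p.2, hp⟩
    · rintro ⟨z, hz⟩
      exact ⟨(x, z), hz, rfl⟩
  · intro x
    obtain ⟨z, hz⟩ := best_exists hν_eq hν_smul hν_add hCne hCcl x
    have ht : Filter.Tendsto (fun t : ℝ => x + t • (z - x)) (nhdsWithin 0 (Set.Ioi 0)) (nhds x) := by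
      have hc : Continuous (fun t : ℝ => x + t • (z - x)) := by fun_prop
      have := hc.tendsto 0
      simp only [zero_smul, add_zero] at this
      exact this.mono_left nhdsWithin_le_nhds
    refine mem_closure_of_tendsto ht ?_
    filter_upwards [Ioo_mem_nhdsGT (zero_lt_one' ℝ)] with t ht
    rw [Set.mem_compl_iff, hSc]
    exact ⟨z, best_unique hν_eq hν_smul hν_add hν_star_diff x z hz t ht.1 ht.2⟩
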